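/- arXiv:1101.0444 — 2 statements merged into one kernel-verified Lean document; each statement's English description precedes it below -/
import Mathlib

section
/- Let X be a compact metric space. For every j ≥ 2, the homotopy group π_j(C(X, ℂ∖{0}), c₁) based at the constant map c₁ with value 1 is trivial. -/
open Topology

/-!
The exponential `ℂ → ℂ∖{0}` is a covering map, so a map `I^N × X → ℂ∖{0}` that equals `1` over
`0 ∈ I^N` has a logarithm vanishing over `0`: lift along the contraction of the cube onto `0`.
When the cube has dimension at least two its boundary is connected, hence the logarithm vanishes
over the whole boundary as soon as the map equals `1` there. Every generalized loop in
`C(X, ℂ∖{0})` therefore comes from one in the topological vector space `C(X, ℂ)`, where the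
straight-line homotopy contracts it.
-/

open scoped unitInterval Topology.Homotopy

section Cube

variable {N : Type*}

theorem isPreconnected_setOf_apply_eq {Y : N → Type*} [∀ i, TopologicalSpace (Y i)]
    [∀ i, PreconnectedSpace (Y i)] (i : N) (e : Y i) : IsPreconnected {y : ∀ i, Y i | y i = e} := by
  classical
  have range_update : Set.range (fun y : ∀ i, Y i ↦ Function.update y i e) = {y | y i = e} := by
    ext y
    refine ⟨?_, fun hy ↦ ⟨y, ?_⟩⟩
    · rintro ⟨z, rfl⟩
      exact Function.update_self i e z
    · subst hy
      exact Function.update_eq_self i y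
  exact range_update ▸ isPreconnected_range (by fun_prop)

theorem isPreconnected_cube_boundary [Nontrivial N] : IsPreconnected (Cube.boundary N) := by
  classical
  have face_subset {e : I} (he : e = 0 ∨ e = 1) (i : N) : {y : I^N | y i = e} ⊆ Cube.boundary N :=
    fun y hy ↦ ⟨i, by rwa [show y i = e from hy]⟩
  have face_preconnected (i : N) (e : I) : IsPreconnected {y : I^N | y i = e} :=
    isPreconnected_setOf_apply_eq (Y := fun _ ↦ I) i e
  refine isPreconnected_of_forall 0 fun y ⟨i, hi⟩ ↦ ?_
  obtain ⟨k, hki⟩ := exists_ne i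
  -- The face of `y` in direction `i` meets the face `{z | z k = 0}`, which contains the origin.
  refine ⟨{z | z i = y i} ∪ {z | z k = 0},
    Set.union_subset (face_subset hi i) (face_subset (.inl rfl) k), .inr rfl, .inl rfl,
    (face_preconnected i (y i)).union (Function.update y k 0)
      (Function.update_of_ne hki.symm 0 y) (Function.update_self k 0 y)
      (face_preconnected k 0)⟩

/-- The contraction `(t, y) ↦ t • y` of the cube `I^N` onto its corner `0`, in which the corner
stays fixed; homotopy lifting along it yields lifts of maps defined on the cube. -/
def cubeContraction (N : Type*) :
    (ContinuousMap.const (I^N) 0).HomotopyRel (ContinuousMap.id (I^N)) {0} where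
  toFun p i := p.1 * p.2 i
  continuous_toFun := by fun_prop
  map_zero_left y := funext fun i ↦ zero_mul (y i)
  map_one_left y := funext fun i ↦ one_mul (y i)
  prop' := by
    rintro t y rfl
    exact funext fun _ ↦ mul_zero t

end Cube

section HomotopyGroup

variable {N : Type*}

theorem subsingleton_homotopyGroup_iff {Y : Type*} [TopologicalSpace Y] {y : Y} :
    Subsingleton (HomotopyGroup N Y y) ↔ ∀ f : Ω^ N Y y, GenLoop.Homotopic f GenLoop.const where
  mp _ f := Quotient.exact (Subsingleton.elim (α := HomotopyGroup N Y y) ⟦f⟧ ⟦GenLoop.const⟧)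
  mpr h := ⟨Quotient.ind₂ fun f g ↦ Quotient.sound ((h f).trans (h g).symm)⟩

theorem subsingleton_homotopyGroup_of_module {V : Type*} [AddCommGroup V] [TopologicalSpace V]
    [IsTopologicalAddGroup V] [Module ℝ V] [ContinuousSMul ℝ V] (v : V) :
    Subsingleton (HomotopyGroup N V v) := by
  refine subsingleton_homotopyGroup_iff.mpr fun f ↦ ⟨⟨.affine f.1 (.const _ v), fun t y hy ↦ ?_⟩⟩
  simp [GenLoop.boundary f y hy]

end HomotopyGroup

section Covering

variable {N X E B : Type*} [TopologicalSpace X] [TopologicalSpace E] [TopologicalSpace B]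
  {p : E → B}

theorem exists_lift_of_isCoveringMap_of_contraction {A : Type*} [TopologicalSpace A] {a₀ : A}
    (hp : IsCoveringMap p)
    (c : (ContinuousMap.const A a₀).HomotopyRel (ContinuousMap.id A) {a₀}) (F : C(A × X, B))
    (s : C(X, E)) (hs : ∀ x, F (a₀, x) = p (s x)) :
    ∃ G : C(A × X, E), (∀ z, p (G z) = F z) ∧ ∀ x, G (a₀, x) = s x := by
  let H : C(I × (A × X), B) := F.comp ⟨fun q ↦ (c (q.1, q.2.1), q.2.2), by fun_prop⟩
  have H_zero (z : A × X) : H (0, z) = p (s.comp .snd z) := by simp [H, hs]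
  have H_base (t : I) (x : X) : H (t, a₀, x) = p (s x) := by
    simp [H, c.eq_fst t (Set.mem_singleton a₀), hs]
  let L := hp.liftHomotopy H (s.comp .snd) H_zero
  have L_lifts (z : I × (A × X)) : p (L z) = H z := congrFun (hp.liftHomotopy_lifts H _ H_zero) z
  refine ⟨L.comp (.prodMk (.const _ 1) (.id _)), fun z ↦ by simp [L_lifts, H], fun x ↦ ?_⟩
  calc L (1, a₀, x) = L (0, a₀, x) :=
        hp.const_of_comp (g := fun t ↦ L (t, a₀, x)) (by fun_prop)
          (fun t t' ↦ by simp only [L_lifts, H_base]) 1 0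
    _ = s x := hp.liftHomotopy_zero H _ H_zero (a₀, x)

theorem exists_genLoop_lift [Nontrivial N] [LocallyCompactPair X B] (hp : IsCoveringMap p)
    (s : C(X, E)) (f : Ω^ N C(X, B) (.comp ⟨p, hp.continuous⟩ s)) :
    ∃ g : Ω^ N C(X, E) s, ∀ y, .comp ⟨p, hp.continuous⟩ (g y) = f y := by
  have f_boundary {y : I^N} (hy : y ∈ Cube.boundary N) (x : X) : f y x = p (s x) :=
    DFunLike.congr_fun (GenLoop.boundary f y hy) x
  have zero_mem : (0 : I^N) ∈ Cube.boundary N := ⟨Classical.arbitrary N, .inl rfl⟩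
  let F : C((I^N) × X, B) := ⟨fun z ↦ f z.1 z.2, by fun_prop⟩
  obtain ⟨G, G_lifts, G_zero⟩ :=
    exists_lift_of_isCoveringMap_of_contraction hp (cubeContraction N) F s (f_boundary zero_mem)
  have G_boundary (y : I^N) (hy : y ∈ Cube.boundary N) (x : X) : G (y, x) = s x :=
    calc G (y, x) = G (0, x) :=
          hp.constOn_of_comp (g := fun y ↦ G (y, x)) isPreconnected_cube_boundary (by fun_prop)
            (fun a ha b hb ↦ by simp [G_lifts, F, f_boundary ha, f_boundary hb]) hy zero_mem
      _ = s x := G_zero x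
  exact ⟨⟨G.curry, fun y hy ↦ ContinuousMap.ext (G_boundary y hy)⟩,
    fun y ↦ ContinuousMap.ext fun x ↦ G_lifts (y, x)⟩

theorem subsingleton_homotopyGroup_continuousMap_of_isCoveringMap [Nontrivial N]
    [LocallyCompactPair X B] (hp : IsCoveringMap p) (s : C(X, E))
    (h : Subsingleton (HomotopyGroup N C(X, E) s)) :
    Subsingleton (HomotopyGroup N C(X, B) (.comp ⟨p, hp.continuous⟩ s)) := by
  refine subsingleton_homotopyGroup_iff.mpr fun f ↦ ?_
  obtain ⟨g, hg⟩ := exists_genLoop_lift hp s f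
  let P : C(C(X, E), C(X, B)) := ⟨_, ContinuousMap.continuous_postcomp ⟨p, hp.continuous⟩⟩
  have f_eq : P.comp g.1 = f.1 := ContinuousMap.ext hg
  change f.1.HomotopicRel (P.comp (.const _ s)) (Cube.boundary N)
  exact f_eq ▸ (subsingleton_homotopyGroup_iff.mp h g).comp_continuousMap P

end Covering

theorem stmt7_general {N X : Type*} [Nontrivial N] [TopologicalSpace X]
    [WeaklyLocallyCompactSpace X] :
    Subsingleton
      (HomotopyGroup N C(X, {z : ℂ // z ≠ 0}) (ContinuousMap.const X ⟨1, one_ne_zero⟩)) := by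
  have exp_zero : ContinuousMap.comp ⟨_, Complex.isCoveringMap_exp.continuous⟩ (.const X 0) =
      ContinuousMap.const X (⟨1, one_ne_zero⟩ : {z : ℂ // z ≠ 0}) :=
    ContinuousMap.ext fun _ ↦ Subtype.ext Complex.exp_zero
  exact exp_zero ▸ subsingleton_homotopyGroup_continuousMap_of_isCoveringMap
    Complex.isCoveringMap_exp _ (subsingleton_homotopyGroup_of_module _)

/-- For a compact metric space `X` and every `j ≥ 2`, the homotopy group
`π_j(C(X, ℂ∖{0}), c₁)` at the constant map with value `1` is trivial. -/
theorem stmt7 {X : Type*} [MetricSpace X] [CompactSpace X] (j : ℕ) (hj : 2 ≤ j) :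
    Subsingleton
      (π_ j C(X, {z : ℂ // z ≠ 0}) (ContinuousMap.const X ⟨1, one_ne_zero⟩)) :=
  have := Fin.nontrivial_iff_two_le.mpr hj
  stmt7_general
end

section
/- Let X be a compact metric space. The fundamental group π₁(C(X, ℂ∖{0}), c₁) based at the constant map c₁ with value 1 is isomorphic to the additive group C(X, ℤ) of continuous integer-valued functions on X (ℤ discrete, addition pointwise). -/
open Topology

/-! Let `p : E → B` be a covering map whose fibre over `p 0` is a group `D` of periods of `p`, as
for `exp : ℂ → ℂ∖{0}` with periods `2πiℤ`. If `C(X, E)` is simply connected, sending `n ∈ C(X, D)`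
to the image of any path in `C(X, E)` from `0` to `n` is a well-defined homomorphism to the
fundamental group of `C(X, B)`. It is surjective because a loop in `C(X, B)` is a map
`I × X → B`, which lifts to `E`, and injective because evaluation at a point of `X` turns
homotopic loops into homotopic loops in `B`, whose lifts have equal endpoints. Postcomposition
with `p` need not itself be a covering map when `X` is not compact, so the lifting is done for `p`.
-/

open scoped unitInterval

section PeriodHom

variable {Y Z M : Type*} [TopologicalSpace Y] [TopologicalSpace Z]

/-- The loop in `Z` obtained by projecting along `q` a path of `Y` whose endpoints have
the same image. -/
def projectedLoop (q : C(Y, Z)) {y y' : Y} (h : q y' = q y) (Γ : Path y y') :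
    Path (q y) (q y) :=
  (Γ.map q.continuous).cast rfl h.symm

theorem projectedLoop_homotopic [SimplyConnectedSpace Y] (q : C(Y, Z)) {y y' : Y}
    (h : q y' = q y) (Γ Γ' : Path y y') :
    (projectedLoop q h Γ).Homotopic (projectedLoop q h Γ') :=
  ((SimplyConnectedSpace.paths_homotopic Γ Γ').map q).pathCast rfl h.symm

variable [AddMonoid Y] [ContinuousAdd Y] [AddMonoid M] {q : C(Y, Z)} {ι : M →+ Y}

theorem projectedLoop_trans_translate (hq : ∀ m, Function.Periodic q (ι m))
    {m n : M} (Γ : Path 0 (ι m)) (Γ' : Path 0 (ι n)) :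
    projectedLoop q (hq (n + m)).eq
        (Γ.trans ((Γ'.map (continuous_add_const (ι m))).cast (zero_add _).symm (map_add ι n m))) =
      (projectedLoop q (hq m).eq Γ).trans (projectedLoop q (hq n).eq Γ') := by
  ext t
  simp only [projectedLoop, Path.cast_coe, Path.map_coe, Function.comp_apply, Path.trans_apply]
  split_ifs
  · rfl
  · exact hq m _

variable [SimplyConnectedSpace Y]

/-- The homomorphism from a monoid `M` of periods of `q : Y → Z` to the fundamental group of `Z`
which sends a period `m` to the class of the projection of any path from `0` to `m`. -/
noncomputable def periodHom (hq : ∀ m, Function.Periodic q (ι m)) :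
    Multiplicative M →* FundamentalGroup Z (q 0) where
  toFun m := .mk (projectedLoop q (hq m.toAdd).eq (PathConnectedSpace.somePath 0 _))
  map_one' := Path.Homotopic.Quotient.eq.2 <|
    projectedLoop_homotopic q _ _ ((Path.refl 0).cast rfl (map_zero ι))
  map_mul' m n := by
    rw [FundamentalGroup.mul_def, ← Path.Homotopic.Quotient.mk_trans,
      ← projectedLoop_trans_translate hq]
    exact Path.Homotopic.Quotient.eq.2 (projectedLoop_homotopic q _ _ _)

theorem periodHom_ofAdd (hq : ∀ m, Function.Periodic q (ι m)) {m : M} (Γ : Path 0 (ι m)) :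
    periodHom hq (.ofAdd m) = .mk (projectedLoop q (hq m).eq Γ) :=
  Path.Homotopic.Quotient.eq.2 (projectedLoop_homotopic q _ _ Γ)

end PeriodHom

section MappingSpace

variable {X E B D : Type*} [TopologicalSpace X] [TopologicalSpace E] [TopologicalSpace B]

theorem eq_of_homotopic_of_lifts {p : E → B} (hp : IsCoveringMap p) {b b' : B} {γ₀ γ₁ : Path b b'}
    (hγ : γ₀.Homotopic γ₁) {e e₀ e₁ : E} {Γ₀ : Path e e₀} {Γ₁ : Path e e₁}
    (h₀ : p ∘ Γ₀ = γ₀) (h₁ : p ∘ Γ₁ = γ₁) : e₀ = e₁ := by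
  have hb₀ : γ₀ 0 = p e := by rw [← h₀, Function.comp_apply, Γ₀.source]
  have hb₁ : γ₁ 0 = p e := by rw [← h₁, Function.comp_apply, Γ₁.source]
  have hΓ₀ := (hp.eq_liftPath_iff' hb₀).2 ⟨h₀, Γ₀.source⟩
  have hΓ₁ := (hp.eq_liftPath_iff' hb₁).2 ⟨h₁, Γ₁.source⟩
  calc
    e₀ = hp.liftPath γ₀ e hb₀ 1 := Γ₀.target.symm.trans (DFunLike.congr_fun hΓ₀ 1)
    _ = hp.liftPath γ₁ e hb₁ 1 := hp.liftPath_apply_one_eq_of_homotopicRel hγ e hb₀ hb₁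
    _ = e₁ := (DFunLike.congr_fun hΓ₁ 1).symm.trans Γ₁.target

/-- Postcomposition with `p`, as a continuous map between mapping spaces. -/
def postcomp (X : Type*) [TopologicalSpace X] (p : C(E, B)) : C(C(X, E), C(X, B)) :=
  ⟨p.comp, ContinuousMap.continuous_postcomp p⟩

variable {p : C(E, B)}

theorem eq_of_projectedLoop_postcomp_homotopic (hp : IsCoveringMap p) {f g₀ g₁ : C(X, E)}
    {h₀ : postcomp X p g₀ = postcomp X p f} {h₁ : postcomp X p g₁ = postcomp X p f}
    {Γ₀ : Path f g₀} {Γ₁ : Path f g₁}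
    (h : (projectedLoop _ h₀ Γ₀).Homotopic (projectedLoop _ h₁ Γ₁)) : g₀ = g₁ := by
  ext x
  exact eq_of_homotopic_of_lifts hp (h.map ⟨_, continuous_eval_const x⟩)
    (Γ₀ := Γ₀.map (continuous_eval_const x)) (Γ₁ := Γ₁.map (continuous_eval_const x)) rfl rfl

theorem exists_path_lift_postcomp [LocallyCompactSpace X] (hp : IsCoveringMap p) {f : C(X, E)}
    {k : C(X, B)} (γ : Path (postcomp X p f) k) :
    ∃ (g : C(X, E)) (Γ : Path f g), postcomp X p ∘ Γ = γ := by
  let H : C(I × X, B) := γ.toContinuousMap.uncurry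
  have H_zero (x : X) : H (0, x) = p (f x) := DFunLike.congr_fun γ.source x
  let L := hp.liftHomotopy H f H_zero
  have L_zero : L.curry 0 = f := ContinuousMap.ext (hp.liftHomotopy_zero H f H_zero)
  refine ⟨L.curry 1, ⟨L.curry, L_zero, rfl⟩, ?_⟩
  ext t x
  exact congr_fun (hp.liftHomotopy_lifts H f H_zero) (t, x)

variable [AddMonoid E] [ContinuousAdd E] [TopologicalSpace D] [AddMonoid D] [ContinuousAdd D]
  {ι : D →+ E}

theorem periodic_postcomp (hι : Continuous ι) (h_period : ∀ d, Function.Periodic p (ι d))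
    (n : C(X, D)) :
    Function.Periodic (postcomp X p) (ι.compLeftContinuous X hι n) :=
  fun f ↦ ContinuousMap.ext fun x ↦ h_period (n x) (f x)

theorem exists_compLeftContinuous_eq (hι : IsEmbedding ι)
    (h_fiber : ∀ e, p e = p 0 → e ∈ Set.range ι) {g : C(X, E)}
    (hg : postcomp X p g = postcomp X p 0) :
    ∃ n : C(X, D), ι.compLeftContinuous X hι.continuous n = g := by
  choose k hk using fun x ↦ h_fiber (g x) (DFunLike.congr_fun hg x)
  have k_cont : Continuous k := by
    rw [hι.continuous_iff, show ι ∘ k = g from funext hk]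
    exact g.continuous
  exact ⟨⟨k, k_cont⟩, ContinuousMap.ext hk⟩

variable [LocallyCompactSpace X] [SimplyConnectedSpace C(X, E)]

theorem periodHom_postcomp_injective (hp : IsCoveringMap p) (hι : IsEmbedding ι)
    (h_period : ∀ d, Function.Periodic p (ι d)) :
    Function.Injective (periodHom (periodic_postcomp (X := X) hι.continuous h_period)) := by
  intro m n hmn
  have h_end := eq_of_projectedLoop_postcomp_homotopic hp (Path.Homotopic.Quotient.exact hmn)
  exact ContinuousMap.postcomp_injective ⟨ι, hι.continuous⟩ hι.injective h_end

theorem periodHom_postcomp_surjective (hp : IsCoveringMap p) (hι : IsEmbedding ι)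
    (h_period : ∀ d, Function.Periodic p (ι d)) (h_fiber : ∀ e, p e = p 0 → e ∈ Set.range ι) :
    Function.Surjective (periodHom (periodic_postcomp (X := X) hι.continuous h_period)) := by
  intro c
  obtain ⟨γ : Path (postcomp X p 0) (postcomp X p 0), rfl⟩ :=
    Path.Homotopic.Quotient.mk_surjective c
  obtain ⟨g, Γ, hΓ⟩ := exists_path_lift_postcomp hp γ
  have hg : postcomp X p g = postcomp X p 0 := by
    rw [← Γ.target, ← γ.target, ← hΓ, Function.comp_apply]
  obtain ⟨n, rfl⟩ := exists_compLeftContinuous_eq hι h_fiber hg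
  exact ⟨.ofAdd n, (periodHom_ofAdd _ Γ).trans (congrArg _ (Path.ext hΓ))⟩

/-- The fundamental group of `C(X, B)` as the group of continuous families of periods of a
covering map `p : E → B`. -/
noncomputable def fundamentalGroupMappingSpaceEquiv (hp : IsCoveringMap p) (hι : IsEmbedding ι)
    (h_period : ∀ d, Function.Periodic p (ι d)) (h_fiber : ∀ e, p e = p 0 → e ∈ Set.range ι) :
    FundamentalGroup C(X, B) (postcomp X p 0) ≃* Multiplicative C(X, D) :=
  (MulEquiv.ofBijective (periodHom (periodic_postcomp hι.continuous h_period))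
    ⟨periodHom_postcomp_injective hp hι h_period,
      periodHom_postcomp_surjective hp hι h_period h_fiber⟩).symm

end MappingSpace

section Exp

/-- The exponential as a continuous map onto the punctured plane. -/
noncomputable def expPunctured : C(ℂ, {z : ℂ // z ≠ 0}) :=
  ⟨fun z ↦ ⟨Complex.exp z, z.exp_ne_zero⟩, Complex.isCoveringMap_exp.continuous⟩

/-- The periods `k ↦ 2πik` of the exponential. -/
noncomputable def expPeriod : ℤ →+ ℂ :=
  zmultiplesHom ℂ (2 * Real.pi * Complex.I)

theorem expPeriod_apply (k : ℤ) : expPeriod k = k * (2 * Real.pi * Complex.I) := by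
  rw [expPeriod, zmultiplesHom_apply, zsmul_eq_mul]

theorem isEmbedding_expPeriod : IsEmbedding expPeriod := by
  have h := (Homeomorph.mulRight₀ _ Complex.two_pi_I_ne_zero).isEmbedding.comp
    Complex.isometry_intCast.isEmbedding
  exact (funext expPeriod_apply : ⇑expPeriod = _) ▸ h

theorem expPunctured_periodic (k : ℤ) : Function.Periodic expPunctured (expPeriod k) :=
  fun z ↦ Subtype.ext (Complex.exp_periodic.zsmul k z)

theorem mem_range_expPeriod {z : ℂ} (hz : expPunctured z = expPunctured 0) :
    z ∈ Set.range expPeriod := by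
  have h_exp : Complex.exp z = 1 := (congrArg Subtype.val hz).trans Complex.exp_zero
  obtain ⟨k, hk⟩ := Complex.exp_eq_one_iff.1 h_exp
  exact ⟨k, (expPeriod_apply k).trans hk.symm⟩

theorem postcomp_expPunctured_zero (X : Type*) [TopologicalSpace X] :
    postcomp X expPunctured 0 = ContinuousMap.const X ⟨1, one_ne_zero⟩ :=
  ContinuousMap.ext fun _ ↦ Subtype.ext Complex.exp_zero

end Exp

theorem stmt8_general {X : Type*} [TopologicalSpace X] [LocallyCompactSpace X] :
    Nonempty
      ((π_ 1 C(X, {z : ℂ // z ≠ 0}) (ContinuousMap.const X ⟨1, one_ne_zero⟩)) ≃*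
        Multiplicative C(X, ℤ)) := by
  rw [← postcomp_expPunctured_zero]
  exact ⟨HomotopyGroup.pi1MulEquivFundamentalGroup.trans
    (fundamentalGroupMappingSpaceEquiv Complex.isCoveringMap_exp isEmbedding_expPeriod
      expPunctured_periodic fun _ ↦ mem_range_expPeriod)⟩

/-- For a compact metric space `X`, the fundamental group of `C(X, ℂ∖{0})` at the
constant map with value `1` is isomorphic to the additive group `C(X, ℤ)` of continuous
integer-valued functions. -/
theorem stmt8 {X : Type*} [MetricSpace X] [CompactSpace X] :
    Nonempty
      ((π_ 1 C(X, {z : ℂ // z ≠ 0}) (ContinuousMap.const X ⟨1, one_ne_zero⟩)) ≃*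
        Multiplicative C(X, ℤ)) :=
  stmt8_general
end
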